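/- Assume dim Γ_∞(f) = n and let γ be a face of Γ_∞(f) with 0 ∈ γ which is NOT atypical. Let ℝ^S be the minimal coordinate subspace of ℝ^n containing γ. Then dim γ = |S|; moreover, for each i ∉ S the set Γ_i = Γ_∞(f) ∩ {v ∈ ℝ^n : v_i = 0} is a facet of Γ_∞(f) containing γ, the sets Γ_i (i ∉ S) are pairwise distinct, and every facet of Γ_∞(f) containing γ equals Γ_i for some i ∉ S; in particular there exist exactly n − |S| facets of Γ_∞(f) containing γ. -/

import Mathlib

open scoped Classical

noncomputable section

/-- Dot product on `ℝⁿ`. -/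
def dotR {n : ℕ} (u v : Fin n → ℝ) : ℝ := ∑ i, u i * v i

/-- The image in `ℝⁿ` of the support of a polynomial. -/
def realSupp {n : ℕ} (f : MvPolynomial (Fin n) ℂ) : Set (Fin n → ℝ) :=
  (fun v : Fin n →₀ ℕ => fun i => (v i : ℝ)) '' {v | MvPolynomial.coeff v f ≠ 0}

/-- The Newton polyhedron at infinity `Γ_∞(f)`. -/
def NPinf {n : ℕ} (f : MvPolynomial (Fin n) ℂ) : Set (Fin n → ℝ) :=
  convexHull ℝ ({0} ∪ realSupp f)

/-- The supporting face `γ_u` of `u` in `Γ_∞(f)`. -/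
def suppFace {n : ℕ} (f : MvPolynomial (Fin n) ℂ) (u : Fin n → ℝ) : Set (Fin n → ℝ) :=
  {v ∈ NPinf f | ∀ w ∈ NPinf f, dotR u v ≤ dotR u w}

/-- A face of `Γ_∞(f)` is any set of the form `γ_u`. -/
def IsFaceOf {n : ℕ} (f : MvPolynomial (Fin n) ℂ) (γ : Set (Fin n → ℝ)) : Prop :=
  ∃ u : Fin n → ℝ, γ = suppFace f u

/-- Dimension of a subset of `ℝⁿ`: the dimension of its affine span. -/
def setDim {n : ℕ} (s : Set (Fin n → ℝ)) : ℕ :=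
  Module.finrank ℝ (affineSpan ℝ s).direction

/-- A face `γ` of `Γ_∞(f)` with `0 ∈ γ` is atypical if some facet of `Γ_∞(f)`
containing `γ` has all its nonzero inner conormal vectors outside `ℝ_{≥0}ⁿ`. -/
def IsAtypicalFace {n : ℕ} (f : MvPolynomial (Fin n) ℂ) (γ : Set (Fin n → ℝ)) : Prop :=
  IsFaceOf f γ ∧ (0 : Fin n → ℝ) ∈ γ ∧
    ∃ Γf : Set (Fin n → ℝ), IsFaceOf f Γf ∧ setDim Γf = n - 1 ∧ γ ⊆ Γf ∧
      ∀ u : Fin n → ℝ, u ≠ 0 → suppFace f u = Γf → ¬ (∀ i, 0 ≤ u i)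

/-- The cone `σ(γ)` of the dual fan of `Γ_∞(f)` corresponding to the face `γ`. -/
def sigmaCone {n : ℕ} (f : MvPolynomial (Fin n) ℂ) (γ : Set (Fin n → ℝ)) : Set (Fin n → ℝ) :=
  closure {u : Fin n → ℝ | suppFace f u = γ}

/-- The coordinate subspace `ℝ^S` of `ℝⁿ`. -/
def coordSub {n : ℕ} (S : Finset (Fin n)) : Set (Fin n → ℝ) :=
  {v | ∀ i ∉ S, v i = 0}

/-- The `γ`-part `f_γ` of `f`. -/
def facePart {n : ℕ} (f : MvPolynomial (Fin n) ℂ) (γ : Set (Fin n → ℝ)) :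
    MvPolynomial (Fin n) ℂ :=
  ∑ v ∈ f.support,
    if (fun i => (v i : ℝ)) ∈ γ then MvPolynomial.monomial v (MvPolynomial.coeff v f) else 0

/-- `f` is non-degenerate at infinity. -/
def NondegAtInfty {n : ℕ} (f : MvPolynomial (Fin n) ℂ) : Prop :=
  ∀ γ : Set (Fin n → ℝ), IsFaceOf f γ → (0 : Fin n → ℝ) ∉ γ →
    ∀ x : Fin n → ℂ, (∀ i, x i ≠ 0) → MvPolynomial.eval x (facePart f γ) = 0 →
      ∃ i, MvPolynomial.eval x (MvPolynomial.pderiv i (facePart f γ)) ≠ 0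

/-- `Δ_γ`: the convex hull of `{0} ∪ γ`. -/
def DeltaG {n : ℕ} (γ : Set (Fin n → ℝ)) : Set (Fin n → ℝ) :=
  convexHull ℝ ({0} ∪ γ)

/-- The lattice `M_γ = ℤⁿ ∩ L(Δ_γ)`. -/
def Mgamma {n : ℕ} (γ : Set (Fin n → ℝ)) : AddSubgroup (Fin n → ℤ) where
  carrier := {v | (fun i => (v i : ℝ)) ∈ Submodule.span ℝ (DeltaG γ)}
  add_mem' := by
    intro a b ha hb
    have h : (fun i => (((a + b) : Fin n → ℤ) i : ℝ))
        = (fun i => (a i : ℝ)) + fun i => (b i : ℝ) := by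
      funext i; push_cast [Pi.add_apply]; ring
    simp only [Set.mem_setOf_eq, h]
    exact Submodule.add_mem _ ha hb
  zero_mem' := by
    have h : (fun i => (((0 : Fin n → ℤ)) i : ℝ)) = (0 : Fin n → ℝ) := by
      funext i; simp
    simp only [Set.mem_setOf_eq, h]
    exact Submodule.zero_mem _
  neg_mem' := by
    intro a ha
    have h : (fun i => (((-a) : Fin n → ℤ) i : ℝ)) = -(fun i => (a i : ℝ)) := by
      funext i; push_cast [Pi.neg_apply]; ring
    simp only [Set.mem_setOf_eq, h]
    exact Submodule.neg_mem _ ha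

/-!
Since `Γ_∞(f)` is full-dimensional, the inner conormals whose supporting face contains `0` and `γ`
form a pointed polyhedral cone. Pairing with the exponents of `f` embeds it linearly into a
nonnegative orthant, where the standard simplex cuts out a compact base; by Krein–Milman the extreme
rays generate the cone. An extreme ray spans the conormal line of a facet containing `γ`. Because
`γ` is not atypical, such a facet has a nonzero conormal in the first quadrant; as `Γ_∞(f)` itself
lies in the first quadrant, the facet is then a coordinate section `Γᵢ`, with conormal line `ℝ eᵢ`.

The cone is thus generated by the `eᵢ` with `Γᵢ` a facet containing `γ`. It contains `eᵢ` for every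
`i ∉ S`, so each of these `Γᵢ` is a facet. A conormal with supporting face `γ` stays in the cone
under small perturbations in any direction annihilating `γ`, so the annihilator of `γ` is
`{w | wᵢ = 0 for i ∈ S}` and `dim γ = |S|`.
-/

section DotPerp

variable {K ι : Type*} [Field K] [Fintype ι]

/-- The annihilator of `s ⊆ Kⁿ` under the dot product. -/
def dotPerp (s : Set (ι → K)) : Submodule K (ι → K) :=
  (Submodule.span K s).dualAnnihilator.comap (dotProductEquiv K ι).toLinearMap

lemma mem_dotPerp {s : Set (ι → K)} {u : ι → K} : u ∈ dotPerp s ↔ ∀ v ∈ s, u ⬝ᵥ v = 0 := by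
  rw [dotPerp, Submodule.mem_comap, Submodule.mem_dualAnnihilator]
  exact Submodule.span_le (p := LinearMap.ker (dotProductEquiv K ι u))

lemma dotPerp_anti {s t : Set (ι → K)} (hst : s ⊆ t) : dotPerp t ≤ dotPerp s :=
  fun _ hu => mem_dotPerp.2 fun v hv => mem_dotPerp.1 hu v (hst hv)

lemma finrank_span_add_finrank_dotPerp (s : Set (ι → K)) :
    Module.finrank K (Submodule.span K s) + Module.finrank K (dotPerp s) = Fintype.card ι := by
  have hcomap : Module.finrank K (dotPerp s) =
      Module.finrank K (Submodule.span K s).dualAnnihilator :=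
    ((dotProductEquiv K ι).ofSubmodule' _).finrank_eq
  rw [hcomap, Subspace.finrank_add_finrank_dualAnnihilator_eq, Module.finrank_fintype_fun_eq_card]

lemma finrank_iInf_ker_proj (S : Finset ι) :
    Module.finrank K (⨅ i ∈ S, LinearMap.ker (LinearMap.proj i : (ι → K) →ₗ[K] K) :
      Submodule K (ι → K)) = Fintype.card ι - S.card := by
  have e := LinearMap.iInfKerProjEquiv K (fun _ : ι => K) (I := (Sᶜ : Finset ι)) (J := S)
    (by simpa using disjoint_compl_left) (by simp)
  exact e.finrank_eq.trans (by simp)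

end DotPerp

section SetDim

variable {n : ℕ} {s : Set (Fin n → ℝ)}

lemma setDim_add_finrank_dotPerp (h0 : (0 : Fin n → ℝ) ∈ s) :
    setDim s + Module.finrank ℝ (dotPerp s) = n := by
  have hspan : (affineSpan ℝ s).direction = Submodule.span ℝ s := by
    rw [direction_affineSpan, vectorSpan_eq_span_vsub_set_right ℝ h0]
    simp
  rw [setDim, hspan, finrank_span_add_finrank_dotPerp, Fintype.card_fin]

lemma setDim_eq_sub_one_iff {u : Fin n → ℝ} (h0 : (0 : Fin n → ℝ) ∈ s) (hu : u ≠ 0)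
    (hus : u ∈ dotPerp s) : setDim s = n - 1 ↔ dotPerp s = ℝ ∙ u := by
  have hdim := setDim_add_finrank_dotPerp h0
  have hle : ℝ ∙ u ≤ dotPerp s := (Submodule.span_singleton_le_iff_mem u _).2 hus
  have hrank := finrank_span_singleton (K := ℝ) hu
  have hmono := Submodule.finrank_mono hle
  constructor
  · intro hs
    exact (Submodule.eq_of_le_of_finrank_eq hle (by omega)).symm
  · intro hs
    rw [hs] at hdim
    omega

end SetDim

section ConeGeneration

open Filter Topology

lemma exists_pos_smul_abs_le {ι : Type*} [Finite ι] {x y : ι → ℝ} (hx : 0 ≤ x)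
    (hxy : ∀ i, x i = 0 → y i = 0) :
    ∃ ε : ℝ, 0 < ε ∧ ε • |y| ≤ x := by
  have hev : ∀ᶠ ε : ℝ in 𝓝[>] 0, ε • |y| ≤ x := by
    refine Filter.eventually_all.2 fun i => ?_
    rcases (hx i).eq_or_lt' with hi | hi
    · simp [hi, hxy i hi]
    · have hlim : Tendsto (fun ε : ℝ => ε * |y i|) (𝓝[>] 0) (𝓝 0) := by
        simpa using (tendsto_id.mul_const |y i|).mono_left (nhdsWithin_le_nhds (a := (0 : ℝ)))
      exact (hlim.eventually_lt_const hi).mono fun _ h => h.le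
  obtain ⟨ε, hε, hpos⟩ := (hev.and self_mem_nhdsWithin).exists
  exact ⟨ε, hpos, hε⟩

variable {V ι : Type*} [AddCommGroup V] [Module ℝ V] [Fintype ι]

lemma mem_span_singleton_of_mem_extremePoints_preimage_stdSimplex {Φ : V →ₗ[ℝ] ι → ℝ} {u w : V}
    (hu : u ∈ (Φ ⁻¹' stdSimplex ℝ ι).extremePoints ℝ) (huw : ∀ i, Φ u i = 0 → Φ w i = 0) :
    w ∈ ℝ ∙ u := by
  obtain ⟨⟨hnonneg, hsum⟩, hext⟩ := hu
  let z := w - (∑ i, Φ w i) • u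
  have hzsum : ∑ i, Φ z i = 0 := by
    simp [z, Finset.sum_sub_distrib, ← Finset.mul_sum, hsum]
  obtain ⟨ε, hε, hεz⟩ : ∃ ε : ℝ, 0 < ε ∧ ε • |Φ z| ≤ Φ u :=
    exists_pos_smul_abs_le hnonneg fun i hi => by simp [z, hi, huw i hi]
  have hmem : ∀ δ : ℝ, |δ| = ε → u + δ • z ∈ Φ ⁻¹' stdSimplex ℝ ι := by
    intro δ hδ
    refine ⟨fun i => ?_, by simp [Finset.sum_add_distrib, ← Finset.mul_sum, hsum, hzsum]⟩
    have hi : |δ * Φ z i| ≤ Φ u i := by simpa [abs_mul, hδ] using hεz i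
    simpa using neg_le_iff_add_nonneg'.1 (abs_le.1 hi).1
  have hmid : u ∈ openSegment ℝ (u + ε • z) (u + -ε • z) :=
    ⟨1 / 2, 1 / 2, by norm_num, by norm_num, by norm_num, by module⟩
  have hz : ε • z = 0 := by
    simpa using hext (hmem ε (abs_of_pos hε)) (hmem (-ε) (by simp [abs_of_pos hε])) hmid
  rw [smul_eq_zero_iff_right hε.ne', sub_eq_zero] at hz
  exact Submodule.mem_span_singleton.2 ⟨_, hz.symm⟩

theorem comap_positive_le_of_extremePoints_subset [TopologicalSpace V] [T2Space V]
    [IsTopologicalAddGroup V] [ContinuousSMul ℝ V] {Φ : V →ₗ[ℝ] ι → ℝ}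
    (hΦ : Function.Injective Φ) {C : PointedCone ℝ V} (hC : IsClosed (C : Set V))
    (hext : (Φ ⁻¹' stdSimplex ℝ ι).extremePoints ℝ ⊆ C) :
    (PointedCone.positive ℝ (ι → ℝ)).comap Φ ≤ C := by
  have := FiniteDimensional.of_injective Φ hΦ
  have hclosed := LinearMap.isClosedEmbedding_of_injective (LinearMap.ker_eq_bot.2 hΦ)
  have := hclosed.isInducing.locallyConvexSpace (𝕜 := ℝ)
  have hcompact : IsCompact (Φ ⁻¹' stdSimplex ℝ ι) :=
    hclosed.isCompact_preimage (isCompact_stdSimplex ℝ ι)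
  have hbase : Φ ⁻¹' stdSimplex ℝ ι ⊆ C := by
    rw [← closure_convexHull_extremePoints hcompact
      ((convex_stdSimplex ℝ ι).linear_preimage Φ)]
    exact closure_minimal (convexHull_min hext C.convex) hC
  intro u hu
  have hnonneg : ∀ i ∈ Finset.univ, 0 ≤ Φ u i := fun i _ => hu i
  rcases (Finset.sum_nonneg hnonneg).eq_or_lt' with hsum | hsum
  · have hzero : Φ u = 0 :=
      funext fun i => (Finset.sum_eq_zero_iff_of_nonneg hnonneg).1 hsum i (Finset.mem_univ i)
    rw [(map_eq_zero_iff Φ hΦ).1 hzero]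
    exact C.zero_mem
  · have hmem : (∑ i, Φ u i)⁻¹ • u ∈ C := hbase
      ⟨fun i => by simpa using mul_nonneg (inv_nonneg.2 hsum.le) (hu i), by
        simp [← Finset.mul_sum, hsum.ne']⟩
    simpa [smul_smul, hsum.ne'] using C.smul_mem hsum.le hmem

end ConeGeneration

/-- The face of the nonnegative orthant generated by the standard basis vectors `eᵢ`, `i ∈ I`. -/
def coordCone {ι : Type*} (I : Set ι) : PointedCone ℝ (ι → ℝ) where
  carrier := {u | 0 ≤ u ∧ ∀ i ∉ I, u i = 0}
  add_mem' hu hw := ⟨add_nonneg hu.1 hw.1, fun i hi => by simp [hu.2 i hi, hw.2 i hi]⟩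
  zero_mem' := ⟨le_rfl, fun _ _ => rfl⟩
  smul_mem' c _ hu := ⟨smul_nonneg c.2 hu.1, fun i hi => by simp [hu.2 i hi]⟩

lemma smul_single_mem_coordCone {ι : Type*} [DecidableEq ι] {I : Set ι} {i : ι} (hi : i ∈ I)
    {c : ℝ} (hc : 0 ≤ c) :
    c • Pi.single i 1 ∈ coordCone I :=
  ⟨smul_nonneg hc (Pi.single_nonneg.2 zero_le_one), fun j hj => by
    simp [Pi.single_eq_of_ne (ne_of_mem_of_not_mem hi hj).symm]⟩

lemma isClosed_coordCone {ι : Type*} (I : Set ι) : IsClosed (coordCone I : Set (ι → ℝ)) := by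
  have hset : (coordCone I : Set (ι → ℝ)) = Set.Ici 0 ∩ ⋂ i ∉ I, {u | u i = 0} := by
    ext u
    simp [coordCone]
  rw [hset]
  exact isClosed_Ici.inter
    (isClosed_biInter fun i _ => isClosed_eq (continuous_apply i) continuous_const)

section NewtonPolyhedron

variable {n : ℕ} {f : MvPolynomial (Fin n) ℂ} {γ : Set (Fin n → ℝ)} {u v : Fin n → ℝ}

lemma dotR_eq_dotProduct (u v : Fin n → ℝ) : dotR u v = u ⬝ᵥ v := rfl

lemma finite_realSupp (f : MvPolynomial (Fin n) ℂ) : (realSupp f).Finite :=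
  (f.support.finite_toSet.subset fun _ hv => MvPolynomial.mem_support_iff.2 hv).image _

lemma zero_mem_NPinf (f : MvPolynomial (Fin n) ℂ) : 0 ∈ NPinf f :=
  subset_convexHull ℝ _ (Or.inl rfl)

lemma realSupp_subset_NPinf (f : MvPolynomial (Fin n) ℂ) : realSupp f ⊆ NPinf f :=
  fun _ hv => subset_convexHull ℝ _ (Or.inr hv)

lemma dotProduct_nonneg_of_mem_NPinf (hu : ∀ a ∈ realSupp f, 0 ≤ u ⬝ᵥ a) (hv : v ∈ NPinf f) :
    0 ≤ u ⬝ᵥ v := by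
  have hconv : Convex ℝ {w | 0 ≤ u ⬝ᵥ w} :=
    convex_halfSpace_ge (dotProductEquiv ℝ (Fin n) u).isLinear 0
  refine convexHull_min ?_ hconv hv
  rintro w (rfl | hw)
  · exact (dotProduct_zero u).ge
  · exact hu w hw

lemma nonneg_of_mem_NPinf (hv : v ∈ NPinf f) : 0 ≤ v := by
  intro i
  have hi := dotProduct_nonneg_of_mem_NPinf (u := Pi.single i 1) (fun a ha => ?_) hv
  · simpa using hi
  · obtain ⟨m, -, rfl⟩ := ha
    simp

lemma dotPerp_NPinf (f : MvPolynomial (Fin n) ℂ) : dotPerp (NPinf f) = dotPerp (realSupp f) := by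
  refine (dotPerp_anti (realSupp_subset_NPinf f)).antisymm fun u hu => mem_dotPerp.2 fun v hv => ?_
  rw [mem_dotPerp] at hu
  have hneg : 0 ≤ -u ⬝ᵥ v := dotProduct_nonneg_of_mem_NPinf (fun a ha => by simp [hu a ha]) hv
  rw [neg_dotProduct] at hneg
  exact (neg_nonneg.1 hneg).antisymm
    (dotProduct_nonneg_of_mem_NPinf (fun a ha => (hu a ha).ge) hv)

lemma dotPerp_NPinf_eq_bot (hdim : setDim (NPinf f) = n) : dotPerp (NPinf f) = ⊥ := by
  have h := setDim_add_finrank_dotPerp (zero_mem_NPinf f)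
  exact Submodule.finrank_eq_zero.1 (by omega)

lemma zero_mem_suppFace_iff : 0 ∈ suppFace f u ↔ ∀ v ∈ NPinf f, 0 ≤ u ⬝ᵥ v := by
  simp [suppFace, dotR_eq_dotProduct, zero_mem_NPinf]

lemma mem_suppFace_iff (h0 : 0 ∈ suppFace f u) :
    v ∈ suppFace f u ↔ v ∈ NPinf f ∧ u ⬝ᵥ v = 0 := by
  have hu := zero_mem_suppFace_iff.1 h0
  refine and_congr_right fun hv => ⟨fun h => ?_, fun h w hw => ?_⟩
  · have hle : u ⬝ᵥ v ≤ 0 := by simpa [dotR_eq_dotProduct] using h 0 (zero_mem_NPinf f)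
    exact hle.antisymm (hu v hv)
  · simpa [dotR_eq_dotProduct, h] using hu w hw

lemma mem_dotPerp_suppFace (h0 : 0 ∈ suppFace f u) : u ∈ dotPerp (suppFace f u) :=
  mem_dotPerp.2 fun _ hv => ((mem_suppFace_iff h0).1 hv).2

/-- The section `Γᵢ` of the Newton polyhedron by the coordinate hyperplane `vᵢ = 0`. -/
def coordFace (f : MvPolynomial (Fin n) ℂ) (i : Fin n) : Set (Fin n → ℝ) :=
  NPinf f ∩ {v | v i = 0}

lemma zero_mem_coordFace (f : MvPolynomial (Fin n) ℂ) (i : Fin n) : 0 ∈ coordFace f i :=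
  ⟨zero_mem_NPinf f, rfl⟩

lemma suppFace_single (f : MvPolynomial (Fin n) ℂ) (i : Fin n) :
    suppFace f (Pi.single i 1) = coordFace f i := by
  have h0 : 0 ∈ suppFace f (Pi.single i 1) :=
    zero_mem_suppFace_iff.2 fun v hv => by simpa using nonneg_of_mem_NPinf hv i
  ext v
  simp [mem_suppFace_iff h0, coordFace]

lemma isFaceOf_coordFace (f : MvPolynomial (Fin n) ℂ) (i : Fin n) : IsFaceOf f (coordFace f i) :=
  ⟨_, (suppFace_single f i).symm⟩

lemma single_mem_dotPerp_coordFace (f : MvPolynomial (Fin n) ℂ) (i : Fin n) :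
    Pi.single i 1 ∈ dotPerp (coordFace f i) :=
  mem_dotPerp.2 fun v hv => by simpa using hv.2

lemma dotPerp_coordFace {i : Fin n} (hi : setDim (coordFace f i) = n - 1) :
    dotPerp (coordFace f i) = ℝ ∙ Pi.single i 1 :=
  (setDim_eq_sub_one_iff (zero_mem_coordFace f i) (by simp)
    (single_mem_dotPerp_coordFace f i)).1 hi

lemma eq_of_coordFace_eq {i j : Fin n} (hi : setDim (coordFace f i) = n - 1)
    (hij : coordFace f i = coordFace f j) : i = j := by
  have hj := single_mem_dotPerp_coordFace f j
  rw [← hij, dotPerp_coordFace hi, Submodule.mem_span_singleton] at hj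
  obtain ⟨c, hc⟩ := hj
  by_contra hne
  simpa [Pi.single_eq_of_ne' hne] using congrFun hc j

lemma suppFace_subset_coordFace (h0 : 0 ∈ suppFace f u) (hu : 0 ≤ u) {i : Fin n} (hi : u i ≠ 0) :
    suppFace f u ⊆ coordFace f i := by
  intro v hv
  obtain ⟨hvP, huv⟩ := (mem_suppFace_iff h0).1 hv
  have hterms := (Finset.sum_eq_zero_iff_of_nonneg fun j _ =>
    mul_nonneg (hu j) (nonneg_of_mem_NPinf hvP j)).1 huv
  exact ⟨hvP, (mul_eq_zero.1 (hterms i (Finset.mem_univ i))).resolve_left hi⟩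

theorem exists_suppFace_eq_coordFace (h0 : 0 ∈ suppFace f u) (hu : 0 ≤ u) (hne : u ≠ 0)
    (hfacet : setDim (suppFace f u) = n - 1) : ∃ i, suppFace f u = coordFace f i := by
  obtain ⟨i, hi⟩ := Function.ne_iff.1 hne
  have hsub := suppFace_subset_coordFace h0 hu hi
  refine ⟨i, hsub.antisymm fun v hv => (mem_suppFace_iff h0).2 ⟨hv.1, ?_⟩⟩
  have hperp : dotPerp (suppFace f u) = ℝ ∙ Pi.single i 1 :=
    (setDim_eq_sub_one_iff h0 (by simp)
      (dotPerp_anti hsub (single_mem_dotPerp_coordFace f i))).1 hfacet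
  obtain ⟨c, rfl⟩ := Submodule.mem_span_singleton.1 (hperp ▸ mem_dotPerp_suppFace h0)
  have hvi : v i = 0 := hv.2
  simp [hvi]

theorem exists_eq_coordFace_of_not_isAtypicalFace (hγ : IsFaceOf f γ) (h0 : 0 ∈ γ)
    (hnot : ¬ IsAtypicalFace f γ) {G : Set (Fin n → ℝ)} (hG : IsFaceOf f G)
    (hfacet : setDim G = n - 1) (hγG : γ ⊆ G) : ∃ i, G = coordFace f i := by
  obtain ⟨u, hne, rfl, hu⟩ : ∃ u : Fin n → ℝ, u ≠ 0 ∧ suppFace f u = G ∧ ∀ i, 0 ≤ u i := by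
    by_contra! hcon
    exact hnot ⟨hγ, h0, G, hG, hfacet, hγG, fun u hne huG hu =>
      let ⟨i, hi⟩ := hcon u hne huG
      hi.not_ge (hu i)⟩
  exact exists_suppFace_eq_coordFace (hγG h0) hu hne hfacet

/-- The cone of the normal fan of the Newton polyhedron attached to a subset `γ`: the inner
conormals whose supporting face contains both `0` and `γ`. -/
def normalCone (f : MvPolynomial (Fin n) ℂ) (γ : Set (Fin n → ℝ)) : PointedCone ℝ (Fin n → ℝ) where
  carrier := {u | (∀ v ∈ NPinf f, 0 ≤ u ⬝ᵥ v) ∧ u ∈ dotPerp γ}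
  add_mem' hu hw :=
    ⟨fun v hv => by simpa [add_dotProduct] using add_nonneg (hu.1 v hv) (hw.1 v hv),
      add_mem hu.2 hw.2⟩
  zero_mem' := ⟨fun v _ => (zero_dotProduct v).ge, zero_mem _⟩
  smul_mem' c u hu :=
    ⟨fun v hv => (mul_nonneg c.2 (hu.1 v hv)).trans_eq (smul_dotProduct (c : ℝ) u v).symm,
      Submodule.smul_mem _ (c : ℝ) hu.2⟩

lemma mem_normalCone_iff :
    u ∈ normalCone f γ ↔ (∀ a ∈ realSupp f, 0 ≤ u ⬝ᵥ a) ∧ u ∈ dotPerp γ :=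
  and_congr_left' ⟨fun h a ha => h a (realSupp_subset_NPinf f ha),
    fun h _ hv => dotProduct_nonneg_of_mem_NPinf h hv⟩

lemma zero_mem_suppFace_of_mem_normalCone (hu : u ∈ normalCone f γ) : 0 ∈ suppFace f u :=
  zero_mem_suppFace_iff.2 hu.1

lemma subset_suppFace_of_mem_normalCone (hγ : γ ⊆ NPinf f) (hu : u ∈ normalCone f γ) :
    γ ⊆ suppFace f u := fun v hv =>
  (mem_suppFace_iff (zero_mem_suppFace_of_mem_normalCone hu)).2 ⟨hγ hv, mem_dotPerp.1 hu.2 v hv⟩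

lemma single_mem_normalCone {i : Fin n} (hi : γ ⊆ coordFace f i) :
    Pi.single i 1 ∈ normalCone f γ :=
  ⟨fun v hv => by simpa using nonneg_of_mem_NPinf hv i,
    dotPerp_anti hi (single_mem_dotPerp_coordFace f i)⟩

lemma nonneg_of_smul_single_mem_normalCone (hdim : setDim (NPinf f) = n) {c : ℝ} {i : Fin n}
    (hc : c • Pi.single i 1 ∈ normalCone f γ) : 0 ≤ c := by
  obtain ⟨v, hv, hvi⟩ : ∃ v ∈ NPinf f, v i ≠ 0 := by
    by_contra! hcon
    have hmem : (Pi.single i 1 : Fin n → ℝ) ∈ dotPerp (NPinf f) :=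
      mem_dotPerp.2 fun v hv => by simpa using hcon v hv
    simp [dotPerp_NPinf_eq_bot hdim] at hmem
  have hpos : 0 < v i := (nonneg_of_mem_NPinf hv i).lt_of_ne' hvi
  exact nonneg_of_mul_nonneg_left (by simpa using hc.1 v hv) hpos

lemma exists_pos_add_smul_mem_normalCone {w : Fin n → ℝ} (h0 : 0 ∈ suppFace f u)
    (hw : w ∈ dotPerp (suppFace f u)) :
    ∃ ε : ℝ, 0 < ε ∧ u + ε • w ∈ normalCone f (suppFace f u) := by
  have := (finite_realSupp f).to_subtype
  have hu := zero_mem_suppFace_iff.1 h0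
  obtain ⟨ε, hε, hle⟩ := exists_pos_smul_abs_le (x := fun a : realSupp f => u ⬝ᵥ a)
    (y := fun a => w ⬝ᵥ a) (fun a => hu a (realSupp_subset_NPinf f a.2)) fun a ha =>
      mem_dotPerp.1 hw a ((mem_suppFace_iff h0).2 ⟨realSupp_subset_NPinf f a.2, ha⟩)
  refine ⟨ε, hε, mem_normalCone_iff.2 ⟨fun a ha => ?_, ?_⟩⟩
  · have habs : ε * |w ⬝ᵥ a| ≤ u ⬝ᵥ a := hle ⟨a, ha⟩
    have hneg : ε * -|w ⬝ᵥ a| ≤ ε * (w ⬝ᵥ a) := by gcongr; exact neg_abs_le _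
    rw [add_dotProduct, smul_dotProduct, smul_eq_mul]
    linarith
  · exact add_mem (mem_dotPerp_suppFace h0) (Submodule.smul_mem _ _ hw)

/-- The linear map `u ↦ (⟨u, a⟩)ₐ` pairing a vector annihilating `γ` with the exponents `a` of `f`;
it identifies `normalCone f γ` with the preimage of the nonnegative orthant. -/
def supportPairing (f : MvPolynomial (Fin n) ℂ) (γ : Set (Fin n → ℝ)) :
    dotPerp γ →ₗ[ℝ] realSupp f → ℝ :=
  LinearMap.pi (fun a => (dotProductBilin ℝ ℝ).flip a.1) ∘ₗ (dotPerp γ).subtype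

lemma supportPairing_apply (u : dotPerp γ) (a : realSupp f) :
    supportPairing f γ u a = (u : Fin n → ℝ) ⬝ᵥ a := rfl

lemma supportPairing_nonneg_iff {u : dotPerp γ} :
    0 ≤ supportPairing f γ u ↔ (u : Fin n → ℝ) ∈ normalCone f γ := by
  simp [mem_normalCone_iff, Pi.le_def, supportPairing_apply]

lemma supportPairing_injective (hdim : setDim (NPinf f) = n) :
    Function.Injective (supportPairing f γ) := by
  refine (injective_iff_map_eq_zero _).2 fun u hu => ?_
  have hmem : (u : Fin n → ℝ) ∈ dotPerp (NPinf f) := by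
    rw [dotPerp_NPinf]
    exact mem_dotPerp.2 fun a ha => congrFun hu ⟨a, ha⟩
  simpa [dotPerp_NPinf_eq_bot hdim] using hmem

section ExtremeRays

variable [Fintype (realSupp f)] {u : dotPerp γ}

lemma dotPerp_suppFace_of_mem_extremePoints (hγ : γ ⊆ NPinf f)
    (hu : u ∈ (supportPairing f γ ⁻¹' stdSimplex ℝ (realSupp f)).extremePoints ℝ) :
    dotPerp (suppFace f u) = ℝ ∙ (u : Fin n → ℝ) := by
  have hcone : (u : Fin n → ℝ) ∈ normalCone f γ := supportPairing_nonneg_iff.1 hu.1.1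
  have h0 := zero_mem_suppFace_of_mem_normalCone hcone
  refine le_antisymm (fun w hw => ?_)
    ((Submodule.span_singleton_le_iff_mem _ _).2 (mem_dotPerp_suppFace h0))
  have hwγ := dotPerp_anti (subset_suppFace_of_mem_normalCone hγ hcone) hw
  have hspan : (⟨w, hwγ⟩ : dotPerp γ) ∈ ℝ ∙ u :=
    mem_span_singleton_of_mem_extremePoints_preimage_stdSimplex hu fun a ha =>
      mem_dotPerp.1 hw a ((mem_suppFace_iff h0).2 ⟨realSupp_subset_NPinf f a.2, ha⟩)
  obtain ⟨c, hc⟩ := Submodule.mem_span_singleton.1 hspan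
  exact Submodule.mem_span_singleton.2 ⟨c, congrArg Subtype.val hc⟩

lemma setDim_suppFace_of_mem_extremePoints (hγ : γ ⊆ NPinf f)
    (hu : u ∈ (supportPairing f γ ⁻¹' stdSimplex ℝ (realSupp f)).extremePoints ℝ) :
    setDim (suppFace f u) = n - 1 := by
  have h0 := zero_mem_suppFace_of_mem_normalCone (supportPairing_nonneg_iff.1 hu.1.1)
  have hne : (u : Fin n → ℝ) ≠ 0 := by
    intro hzero
    have hsum := hu.1.2
    simp [supportPairing_apply, hzero] at hsum
  exact (setDim_eq_sub_one_iff h0 hne (mem_dotPerp_suppFace h0)).2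
    (dotPerp_suppFace_of_mem_extremePoints hγ hu)

end ExtremeRays

theorem normalCone_le_coordCone (hdim : setDim (NPinf f) = n) (hγ : γ ⊆ NPinf f)
    (hfacets : ∀ G, IsFaceOf f G → setDim G = n - 1 → γ ⊆ G → ∃ i, G = coordFace f i) :
    normalCone f γ ≤ coordCone {i | setDim (coordFace f i) = n - 1 ∧ γ ⊆ coordFace f i} := by
  have := (finite_realSupp f).fintype
  set I := {i | setDim (coordFace f i) = n - 1 ∧ γ ⊆ coordFace f i}
  have hgen : (PointedCone.positive ℝ (realSupp f → ℝ)).comap (supportPairing f γ) ≤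
      (coordCone I).comap (dotPerp γ).subtype := by
    refine comap_positive_le_of_extremePoints_subset (supportPairing_injective hdim)
      ((isClosed_coordCone I).preimage continuous_subtype_val) fun u hu => ?_
    have hcone : (u : Fin n → ℝ) ∈ normalCone f γ := supportPairing_nonneg_iff.1 hu.1.1
    have hγu := subset_suppFace_of_mem_normalCone hγ hcone
    have hfacet := setDim_suppFace_of_mem_extremePoints hγ hu
    obtain ⟨i, hi⟩ := hfacets _ ⟨_, rfl⟩ hfacet hγu
    have hmem := mem_dotPerp_suppFace (zero_mem_suppFace_of_mem_normalCone hcone)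
    rw [hi] at hfacet hγu hmem
    rw [dotPerp_coordFace hfacet] at hmem
    obtain ⟨c, hc⟩ := Submodule.mem_span_singleton.1 hmem
    rw [← hc] at hcone
    have hiI : i ∈ I := ⟨hfacet, hγu⟩
    change (u : Fin n → ℝ) ∈ coordCone I
    rw [← hc]
    exact smul_single_mem_coordCone hiI (nonneg_of_smul_single_mem_normalCone hdim hcone)
  exact fun u hu => hgen (x := ⟨u, hu.2⟩) (supportPairing_nonneg_iff.2 hu)

theorem setDim_coordFace (hdim : setDim (NPinf f) = n) (hγ : γ ⊆ NPinf f)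
    (hfacets : ∀ G, IsFaceOf f G → setDim G = n - 1 → γ ⊆ G → ∃ i, G = coordFace f i)
    {i : Fin n} (hi : γ ⊆ coordFace f i) : setDim (coordFace f i) = n - 1 := by
  by_contra hcon
  have hzero := (normalCone_le_coordCone hdim hγ hfacets (single_mem_normalCone hi)).2 i
    fun h => hcon h.1
  simp at hzero

theorem bijOn_coordFace (hdim : setDim (NPinf f) = n) (hγ : γ ⊆ NPinf f)
    (hfacets : ∀ G, IsFaceOf f G → setDim G = n - 1 → γ ⊆ G → ∃ i, G = coordFace f i) :
    Set.BijOn (coordFace f) {i | γ ⊆ coordFace f i}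
      {G | IsFaceOf f G ∧ setDim G = n - 1 ∧ γ ⊆ G} := by
  have hfacet := fun i hi => setDim_coordFace (i := i) hdim hγ hfacets hi
  refine ⟨fun i hi => ⟨isFaceOf_coordFace f i, hfacet i hi, hi⟩,
    fun i hi j _ hij => eq_of_coordFace_eq (hfacet i hi) hij,
    fun G hG => ?_⟩
  obtain ⟨hGface, hGdim, hγG⟩ := hG
  obtain ⟨i, rfl⟩ := hfacets G hGface hGdim hγG
  exact ⟨i, hγG, rfl⟩

theorem setDim_eq_card {S : Finset (Fin n)} (hγ : IsFaceOf f γ) (h0 : 0 ∈ γ)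
    (hS : γ ⊆ coordSub S) (hcone : normalCone f γ ≤ coordCone (Sᶜ : Set (Fin n))) :
    setDim γ = S.card := by
  obtain ⟨u, rfl⟩ := hγ
  have hperp : dotPerp (suppFace f u) =
      ⨅ i ∈ S, LinearMap.ker (LinearMap.proj i : (Fin n → ℝ) →ₗ[ℝ] ℝ) := by
    ext w
    simp only [Submodule.mem_iInf, LinearMap.mem_ker, LinearMap.proj_apply]
    constructor
    · intro hw i hi
      have hu : u ∈ normalCone f (suppFace f u) :=
        ⟨zero_mem_suppFace_iff.1 h0, mem_dotPerp_suppFace h0⟩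
      obtain ⟨ε, hε, hmem⟩ := exists_pos_add_smul_mem_normalCone h0 hw
      have hui : u i = 0 := (hcone hu).2 i (not_not_intro hi)
      simpa [hui, hε.ne'] using (hcone hmem).2 i (not_not_intro hi)
    · intro hw
      refine mem_dotPerp.2 fun v hv => Finset.sum_eq_zero fun i _ => ?_
      by_cases hi : i ∈ S
      · simp [hw i hi]
      · simp [hS hv i hi]
  have hdim := setDim_add_finrank_dotPerp h0
  rw [hperp, finrank_iInf_ker_proj, Fintype.card_fin] at hdim
  have hcard := card_finset_fin_le S
  omega

lemma setOf_subset_coordFace {S : Finset (Fin n)} (hγ : γ ⊆ NPinf f) (hS : γ ⊆ coordSub S)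
    (hmin : ∀ S' : Finset (Fin n), γ ⊆ coordSub S' → S ⊆ S') :
    {i | γ ⊆ coordFace f i} = (Sᶜ : Set (Fin n)) := by
  ext i
  refine ⟨fun hi hiS => ?_, fun hi v hv => ⟨hγ hv, hS hv i hi⟩⟩
  have hsub : γ ⊆ coordSub (Finset.univ.erase i) := fun v hv j hj => by
    obtain rfl : j = i := by simpa using hj
    exact (hi hv).2
  exact Finset.notMem_erase i _ (hmin _ hsub hiS)

end NewtonPolyhedron

/-- If a face `γ` of `Γ_∞(f)` with `0 ∈ γ` is not atypical and `ℝ^S` is the minimal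
coordinate subspace containing `γ`, then `dim γ = |S|` and the facets of `Γ_∞(f)`
containing `γ` are exactly the `n - |S|` pairwise distinct sets
`Γ_i = Γ_∞(f) ∩ {v : v_i = 0}` for `i ∉ S`. -/
theorem facets_of_non_atypical_face {n : ℕ} (f : MvPolynomial (Fin n) ℂ)
    (hdim : setDim (NPinf f) = n) (γ : Set (Fin n → ℝ))
    (hγ : IsFaceOf f γ) (h0 : (0 : Fin n → ℝ) ∈ γ)
    (hnot : ¬ IsAtypicalFace f γ)
    (S : Finset (Fin n)) (hS : γ ⊆ coordSub S)
    (hmin : ∀ S' : Finset (Fin n), γ ⊆ coordSub S' → S ⊆ S') :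
    setDim γ = S.card ∧
    (∀ i ∉ S, IsFaceOf f (NPinf f ∩ {v : Fin n → ℝ | v i = 0}) ∧
      setDim (NPinf f ∩ {v : Fin n → ℝ | v i = 0}) = n - 1 ∧
      γ ⊆ NPinf f ∩ {v : Fin n → ℝ | v i = 0}) ∧
    (∀ i ∉ S, ∀ j ∉ S,
      NPinf f ∩ {v : Fin n → ℝ | v i = 0} = NPinf f ∩ {v : Fin n → ℝ | v j = 0} → i = j) ∧
    (∀ Γf : Set (Fin n → ℝ), IsFaceOf f Γf → setDim Γf = n - 1 → γ ⊆ Γf →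
      ∃ i ∉ S, Γf = NPinf f ∩ {v : Fin n → ℝ | v i = 0}) ∧
    {Γf : Set (Fin n → ℝ) | IsFaceOf f Γf ∧ setDim Γf = n - 1 ∧ γ ⊆ Γf}.ncard = n - S.card := by
  have hγP : γ ⊆ NPinf f := by
    obtain ⟨u, rfl⟩ := hγ
    exact fun v hv => hv.1
  have hfacets : ∀ G, IsFaceOf f G → setDim G = n - 1 → γ ⊆ G → ∃ i, G = coordFace f i :=
    fun G => exists_eq_coordFace_of_not_isAtypicalFace hγ h0 hnot
  have hcompl : {i | γ ⊆ coordFace f i} = (Sᶜ : Set (Fin n)) := setOf_subset_coordFace hγP hS hmin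
  have hcone : normalCone f γ ≤ coordCone (Sᶜ : Set (Fin n)) := fun u hu =>
    have ⟨hnonneg, hzero⟩ := normalCone_le_coordCone hdim hγP hfacets hu
    ⟨hnonneg, fun i hi => hzero i fun h => hi (hcompl.subset h.2)⟩
  have hbij : Set.BijOn (coordFace f) (Sᶜ : Set (Fin n))
      {G | IsFaceOf f G ∧ setDim G = n - 1 ∧ γ ⊆ G} :=
    hcompl ▸ bijOn_coordFace hdim hγP hfacets
  refine ⟨setDim_eq_card hγ h0 hS hcone, fun i hi => hbij.mapsTo hi,
    fun i hi j hj hij => hbij.injOn hi hj hij, fun G hG hGdim hγG => ?_, ?_⟩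
  · obtain ⟨i, hi, rfl⟩ := hbij.surjOn ⟨hG, hGdim, hγG⟩
    exact ⟨i, hi, rfl⟩
  · rw [← hbij.image_eq, hbij.injOn.ncard_image, ← Finset.coe_compl, Set.ncard_coe_finset,
      Finset.card_compl, Fintype.card_fin]
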